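/- A λI-term M admits a derivation Γ;Δ ⊢ M : α for some environment Γ;Δ and some simple type α in the multi-type system for the λI-calculus if and only if M has a head normal form (i.e., M head-reduces to a term of the shape λx₁…xₙ.y M₁⋯Mₖ). -/

import Mathlib

set_option maxHeartbeats 1000000

/-! # λ-terms (named variables over ℕ) -/

inductive Lam : Type
  | var : ℕ → Lam
  | app : Lam → Lam → Lam
  | lam : ℕ → Lam → Lam
deriving DecidableEq

namespace Lam

/-- Free variables of a λ-term. -/
def fv : Lam → Finset ℕ
  | var x => {x}
  | app M N => M.fv ∪ N.fv
  | lam x M => M.fv.erase x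

/-- λI-terms: every abstraction `λx.M` satisfies `x ∈ fv M`. -/
def IsI : Lam → Prop
  | var _ => True
  | app M N => M.IsI ∧ N.IsI
  | lam x M => x ∈ M.fv ∧ M.IsI

/-- A variable not belonging to a given finite set. -/
def freshVar (s : Finset ℕ) : ℕ := (s.sup id) + 1

/-- Capture-avoiding simultaneous substitution (bound variables are freshened). -/
def substF : Lam → (ℕ → Lam) → Lam
  | var x, σ => σ x
  | app M N, σ => app (M.substF σ) (N.substF σ)
  | lam x M, σ =>
      let y := freshVar ((M.fv.erase x).biUnion fun z => (σ z).fv)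
      lam y (M.substF (Function.update σ x (var y)))

/-- Capture-avoiding substitution `M[N/x]`. -/
def subst (M : Lam) (x : ℕ) (N : Lam) : Lam :=
  M.substF fun z => if z = x then N else var z

/-- Being an abstraction. -/
def isAbs : Lam → Prop
  | lam _ _ => True
  | _ => False

end Lam

/-- One-step β-reduction. -/
inductive Beta : Lam → Lam → Prop
  | beta (x : ℕ) (M N : Lam) : Beta (.app (.lam x M) N) (M.subst x N)
  | appL {M M' : Lam} (N : Lam) : Beta M M' → Beta (.app M N) (.app M' N)
  | appR {N N' : Lam} (M : Lam) : Beta N N' → Beta (.app M N) (.app M N')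
  | lam (x : ℕ) {M M' : Lam} : Beta M M' → Beta (.lam x M) (.lam x M')

/-- One-step head reduction. -/
inductive Head : Lam → Lam → Prop
  | beta (x : ℕ) (M N : Lam) : Head (.app (.lam x M) N) (M.subst x N)
  | app {M M' : Lam} (N : Lam) : ¬ M.isAbs → Head M M' → Head (.app M N) (.app M' N)
  | lam (x : ℕ) {M M' : Lam} : Head M M' → Head (.lam x M) (.lam x M')

/-- Iterated head reduction. -/
def HeadStar : Lam → Lam → Prop := Relation.ReflTransGen Head

/-- Terms of the shape `y M₁ ⋯ Mₖ`. -/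
inductive Neutral : Lam → Prop
  | var (x : ℕ) : Neutral (.var x)
  | app {M : Lam} (N : Lam) : Neutral M → Neutral (.app M N)

/-- Head normal forms `λx₁…xₙ.y M₁ ⋯ Mₖ`. -/
inductive Hnf : Lam → Prop
  | neutral {M : Lam} : Neutral M → Hnf M
  | lam (x : ℕ) {M : Lam} : Hnf M → Hnf (.lam x M)

/-- `M` has a head normal form. -/
def HasHnf (M : Lam) : Prop := ∃ H, HeadStar M H ∧ Hnf H

/-! # Multi-types -/

/-- Simple types: atoms `a ∈ ℕ`, arrows `[]_X → β` and `[α₀,…,αₙ] → β`. -/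
inductive STy : Type
  | atom : ℕ → STy
  | arr0 : Finset ℕ → STy → STy
  | arrP : STy → List STy → STy → STy

/-- Multiset types: the annotated empty multiset `[]_X` or a
non-empty multiset `[α₀,…,αₙ]` (head plus tail). -/
inductive MTy : Type
  | empty : Finset ℕ → MTy
  | mk : STy → List STy → MTy

/-- The arrow type `ᾱ → β`. -/
def MTy.arr : MTy → STy → STy
  | .empty X, β => .arr0 X β
  | .mk α l, β => .arrP α l β

/-- The underlying multiset of simple types of a multiset type. -/
def MTy.toM : MTy → Multiset STy
  | .empty _ => 0
  | .mk α l => α ::ₘ (l : Multiset STy)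

/-- Multi-types: `σ ::= e_X | α`. -/
inductive OTy : Type
  | esum : Finset ℕ → OTy
  | simple : STy → OTy

mutual
/-- Atoms occurring in a simple type. -/
def STy.atoms : STy → Finset ℕ
  | .atom a => {a}
  | .arr0 _ β => β.atoms
  | .arrP α l β => α.atoms ∪ STy.atomsL l ∪ β.atoms
def STy.atomsL : List STy → Finset ℕ
  | [] => ∅
  | α :: l => α.atoms ∪ STy.atomsL l
end

/-! # Environments -/

/-- Type environments: finitely supported maps from variables
to finite multisets of simple types; added pointwise. -/
abbrev TEnv := ℕ →₀ Multiset STy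

/-- Variable environments: finite partial maps from variables to finite
sets of variables. -/
abbrev VEnv := Finmap (fun _ : ℕ => Finset ℕ)

namespace VEnv

/-- `⋃Δ`: the union of the values of `Δ`. -/
def uni (Δ : VEnv) : Finset ℕ :=
  Δ.keys.biUnion fun x => (Δ.lookup x).getD ∅

/-- Coherence `Δ₀ ≍ Δ₁`: agreement on the common domain. -/
def Coh (Δ₀ Δ₁ : VEnv) : Prop :=
  ∀ x : ℕ, x ∈ Δ₀ → x ∈ Δ₁ → Δ₀.lookup x = Δ₁.lookup x

end VEnv

/-! # The multi-type system for the λI-calculus -/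

mutual
/-- Typing judgement `Γ; Δ ⊢ M : σ`. -/
inductive Der : TEnv → VEnv → Lam → OTy → Prop
  | esum {Δ : VEnv} {M : Lam} :
      Δ.keys = M.fv → Der 0 Δ M (.esum Δ.uni)
  | ax (x : ℕ) (α : STy) (X : Finset ℕ) :
      Der (Finsupp.single x {α}) (Finmap.singleton x X) (.var x) (.simple α)
  | app {Γ₀ Γ₁ : TEnv} {Δ₀ Δ₁ : VEnv} {M N : Lam} {m : MTy} {β : STy} :
      Der Γ₀ Δ₀ M (.simple (m.arr β)) → DerB Γ₁ Δ₁ N m → VEnv.Coh Δ₀ Δ₁ →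
      Der (Γ₀ + Γ₁) (Δ₀ ∪ Δ₁) (.app M N) (.simple β)
  | lam0 {Γ : TEnv} {Δ : VEnv} {x : ℕ} {X : Finset ℕ} {M : Lam} {β : STy} :
      Γ x = 0 → x ∉ Δ → Der Γ (Δ.insert x X) M (.simple β) →
      Der Γ Δ (.lam x M) (.simple (.arr0 X β))
  | lamP {Γ : TEnv} {Δ : VEnv} {x : ℕ} {X : Finset ℕ} {M : Lam} {α : STy}
      {l : List STy} {β : STy} :
      Γ x = 0 → x ∉ Δ →
      Der (Γ + Finsupp.single x (MTy.mk α l).toM) (Δ.insert x X) M (.simple β) →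
      Der Γ Δ (.lam x M) (.simple (.arrP α l β))

/-- Typing judgement `Γ; Δ ⊢! M : ᾱ`. -/
inductive DerB : TEnv → VEnv → Lam → MTy → Prop
  | bang0 {Δ : VEnv} {M : Lam} :
      Δ.keys = M.fv → DerB 0 Δ M (.empty Δ.uni)
  | one {Γ : TEnv} {Δ : VEnv} {M : Lam} {α : STy} :
      Der Γ Δ M (.simple α) → DerB Γ Δ M (.mk α [])
  | cons {Γ₀ Γ₁ : TEnv} {Δ : VEnv} {M : Lam} {α α' : STy} {l : List STy} :
      Der Γ₀ Δ M (.simple α) → DerB Γ₁ Δ M (.mk α' l) →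
      DerB (Γ₀ + Γ₁) Δ M (.mk α (α' :: l))
end

/-- The multi-type interpretation `⟦M⟧`. -/
def interp (M : Lam) : Set (TEnv × VEnv × OTy) :=
  { p | Der p.1 p.2.1 M p.2.2 }

/-! # Ohana trees (coinductive equality, as a greatest fixpoint) -/

/-- Matching of the spines `y M₁ ⋯ Mₖ` of two head normal forms:
same head variable, same number of arguments, arguments related by `R`. -/
inductive SpineMatch (R : Lam → Lam → Prop) : Lam → Lam → Prop
  | var (y : ℕ) : SpineMatch R (.var y) (.var y)
  | app {P Q M N : Lam} : SpineMatch R P Q → R M N →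
      SpineMatch R (.app P M) (.app Q N)

/-- Matching of two head normal forms, comparing abstraction prefixes
up to renaming of the bound variables. -/
inductive HnfMatch (R : Lam → Lam → Prop) : Lam → Lam → Prop
  | base {P Q : Lam} : SpineMatch R P Q → HnfMatch R P Q
  | lam {x y : ℕ} {P Q : Lam} :
      (∀ z : ℕ, z ∉ (P.fv.erase x ∪ Q.fv.erase y) →
        HnfMatch R (P.subst x (.var z)) (Q.subst y (.var z))) →
      HnfMatch R (.lam x P) (.lam y Q)

/-- `R` is an Ohana-tree bisimulation. -/
def OTBisim (R : Lam → Lam → Prop) : Prop :=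
  ∀ M N, R M N →
    (¬ HasHnf M ∧ ¬ HasHnf N ∧ M.fv = N.fv) ∨
    (∃ P Q, HeadStar M P ∧ HeadStar N Q ∧ Hnf P ∧ Hnf Q ∧ HnfMatch R P Q)

/-- Equality of Ohana trees: `OT(M) = OT(N)`. -/
def OTEq (M N : Lam) : Prop := ∃ R, OTBisim R ∧ R M N

/-! # λI-resource terms -/

mutual
inductive RTm : Type
  | var : ℕ → RTm
  | lam : ℕ → RTm → RTm
  | app : RTm → RBag → RTm
inductive RBag : Type
  | empty : Finset ℕ → RBag
  | mk : RTm → List RTm → RBag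
end

noncomputable instance : DecidableEq RTm := fun _ _ => Classical.dec _
noncomputable instance : DecidableEq RBag := fun _ _ => Classical.dec _

mutual
/-- Free variables of a resource term. -/
def RTm.fv : RTm → Finset ℕ
  | .var x => {x}
  | .lam x s => s.fv.erase x
  | .app s b => s.fv ∪ b.fv
/-- Free variables of a bag. -/
def RBag.fv : RBag → Finset ℕ
  | .empty X => X
  | .mk h t => h.fv ∪ RTm.fvL t
/-- Free variables of a list of resource terms. -/
def RTm.fvL : List RTm → Finset ℕ
  | [] => ∅
  | h :: t => h.fv ∪ RTm.fvL t
end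

mutual
/-- λI-resource terms: in every abstraction `λx.s`, `x` occurs free in `s`. -/
inductive RTm.IsIr : RTm → Prop
  | var (x : ℕ) : RTm.IsIr (.var x)
  | lam {x : ℕ} {s : RTm} : x ∈ s.fv → RTm.IsIr s → RTm.IsIr (.lam x s)
  | app {s : RTm} {b : RBag} : RTm.IsIr s → RBag.IsIr b → RTm.IsIr (.app s b)
inductive RBag.IsIr : RBag → Prop
  | empty (X : Finset ℕ) : RBag.IsIr (.empty X)
  | mk {h : RTm} {t : List RTm} : RTm.IsIr h → (∀ u ∈ t, RTm.IsIr u) →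
      RBag.IsIr (.mk h t)
end

/-- The list of elements of a bag. -/
def RBag.toList : RBag → List RTm
  | .empty _ => []
  | .mk h t => h :: t

/-! Linear (bijective) substitution: `LSub s x ts t` means that `t` is obtained
by substituting the elements of the list `ts` for the free occurrences of `x`
in `s`, in left-to-right order (annotations of empty bags absorb). -/
mutual
inductive LSub : RTm → ℕ → List RTm → RTm → Prop
  | var_hit (x : ℕ) (t : RTm) : LSub (.var x) x [t] t
  | var_miss {x y : ℕ} : y ≠ x → LSub (.var y) x [] (.var y)
  | lam {x y : ℕ} {s : RTm} {ts : List RTm} {s' : RTm} :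
      y ≠ x → y ∉ RTm.fvL ts → LSub s x ts s' →
      LSub (.lam y s) x ts (.lam y s')
  | app {s : RTm} {b : RBag} {x : ℕ} {ts₁ ts₂ : List RTm} {s' : RTm} {b' : RBag} :
      LSub s x ts₁ s' → LSubB b x ts₂ b' →
      LSub (.app s b) x (ts₁ ++ ts₂) (.app s' b')
inductive LSubB : RBag → ℕ → List RTm → RBag → Prop
  | empty_hit {X : Finset ℕ} {x : ℕ} {ts : List RTm} :
      x ∈ X → LSubB (.empty X) x ts (.empty ((X.erase x) ∪ RTm.fvL ts))
  | empty_miss {X : Finset ℕ} {x : ℕ} :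
      x ∉ X → LSubB (.empty X) x [] (.empty X)
  | mk {h : RTm} {t : List RTm} {x : ℕ} {ts₁ ts₂ : List RTm} {h' : RTm}
      {t' : List RTm} :
      LSub h x ts₁ h' → LSubL t x ts₂ t' →
      LSubB (.mk h t) x (ts₁ ++ ts₂) (.mk h' t')
inductive LSubL : List RTm → ℕ → List RTm → List RTm → Prop
  | nil (x : ℕ) : LSubL [] x [] []
  | cons {h : RTm} {t : List RTm} {x : ℕ} {ts₁ ts₂ : List RTm} {h' : RTm}
      {t' : List RTm} :
      LSub h x ts₁ h' → LSubL t x ts₂ t' →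
      LSubL (h :: t) x (ts₁ ++ ts₂) (h' :: t')
end

/-- The root resource reduction step `(λx.s)b →r T`:
`T` is the sum of all results of bijective substitution of the elements
of `b` for the free occurrences of `x` in `s`. -/
def RootRed (x : ℕ) (s : RTm) (b : RBag) (T : Finset RTm) : Prop :=
  ∀ u : RTm, u ∈ T ↔ ∃ l : List RTm, l.Perm b.toList ∧ LSub s x l u

/-- Pushing an element on top of a bag. -/
def RBag.push (h : RTm) : RBag → RBag
  | .empty _ => .mk h []
  | .mk h' t => .mk h (h' :: t)

mutual
/-- One-step resource reduction of a term to a finite sum. -/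
inductive RStep : RTm → Finset RTm → Prop
  | root {x : ℕ} {s : RTm} {b : RBag} {T : Finset RTm} :
      RootRed x s b T → RStep (.app (.lam x s) b) T
  | appL {s : RTm} {T : Finset RTm} {b : RBag} :
      RStep s T → RStep (.app s b) (T.image fun s' => .app s' b)
  | appB {s : RTm} {b : RBag} {Tb : Finset RBag} :
      RStepB b Tb → RStep (.app s b) (Tb.image fun b' => .app s b')
  | lam {x : ℕ} {s : RTm} {T : Finset RTm} :
      RStep s T → RStep (.lam x s) (T.image fun s' => .lam x s')
/-- One-step resource reduction inside a bag. -/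
inductive RStepB : RBag → Finset RBag → Prop
  | head {h : RTm} {t : List RTm} {T : Finset RTm} :
      RStep h T → RStepB (.mk h t) (T.image fun h' => .mk h' t)
  | tail {h h₂ : RTm} {t : List RTm} {B : Finset RBag} :
      RStepB (.mk h₂ t) B → RStepB (.mk h (h₂ :: t)) (B.image (RBag.push h))
end

/-- One-step resource reduction on finite sums (linear extension). -/
inductive RRed : Finset RTm → Finset RTm → Prop
  | step {S : Finset RTm} {s : RTm} {T : Finset RTm} :
      s ∈ S → RStep s T → RRed S ((S.erase s) ∪ T)

/-- `→r*`. -/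
def RRedStar : Finset RTm → Finset RTm → Prop := Relation.ReflTransGen RRed

/-! # The resource multi-type system -/

mutual
/-- Resource typing judgement `Γ; Δ ⊢ s : α`. -/
inductive DerR : TEnv → VEnv → RTm → STy → Prop
  | ax (x : ℕ) (α : STy) (X : Finset ℕ) :
      DerR (Finsupp.single x {α}) (Finmap.singleton x X) (.var x) α
  | app {Γ₀ Γ₁ : TEnv} {Δ₀ Δ₁ : VEnv} {s : RTm} {b : RBag} {m : MTy} {β : STy} :
      DerR Γ₀ Δ₀ s (m.arr β) → DerRB Γ₁ Δ₁ b m → VEnv.Coh Δ₀ Δ₁ →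
      DerR (Γ₀ + Γ₁) (Δ₀ ∪ Δ₁) (.app s b) β
  | lam0 {Γ : TEnv} {Δ : VEnv} {x : ℕ} {X : Finset ℕ} {s : RTm} {β : STy} :
      Γ x = 0 → x ∉ Δ → DerR Γ (Δ.insert x X) s β →
      DerR Γ Δ (.lam x s) (.arr0 X β)
  | lamP {Γ : TEnv} {Δ : VEnv} {x : ℕ} {X : Finset ℕ} {s : RTm} {α : STy}
      {l : List STy} {β : STy} :
      Γ x = 0 → x ∉ Δ →
      DerR (Γ + Finsupp.single x (MTy.mk α l).toM) (Δ.insert x X) s β →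
      DerR Γ Δ (.lam x s) (.arrP α l β)
/-- Resource typing judgement `Γ; Δ ⊢! t̄ : ᾱ`. -/
inductive DerRB : TEnv → VEnv → RBag → MTy → Prop
  | bang0 {Δ : VEnv} : DerRB 0 Δ (.empty Δ.keys) (.empty Δ.uni)
  | one {Γ : TEnv} {Δ : VEnv} {t : RTm} {α : STy} :
      DerR Γ Δ t α → DerRB Γ Δ (.mk t []) (.mk α [])
  | cons {Γ₀ Γ₁ : TEnv} {Δ : VEnv} {t t' : RTm} {l : List RTm} {α α' : STy}
      {la : List STy} :
      DerR Γ₀ Δ t α → DerRB Γ₁ Δ (.mk t' l) (.mk α' la) →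
      DerRB (Γ₀ + Γ₁) Δ (.mk t (t' :: l)) (.mk α (α' :: la))
end

/-! # Taylor expansion -/

/-- `Taylor M s`: the resource term `s` belongs to the Taylor expansion `T(M)`. -/
inductive Taylor : Lam → RTm → Prop
  | var (x : ℕ) : Taylor (.var x) (.var x)
  | lam {M : Lam} {s : RTm} (x : ℕ) : Taylor M s → Taylor (.lam x M) (.lam x s)
  | app0 {M N : Lam} {s : RTm} : Taylor M s →
      Taylor (.app M N) (.app s (.empty N.fv))
  | appP {M N : Lam} {s t : RTm} {l : List RTm} :
      Taylor M s → Taylor N t → (∀ u ∈ l, Taylor N u) →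
      Taylor (.app M N) (.app s (.mk t l))

/-! # Miscellaneous constructions for the last statement -/

/-- The variable environment `Δ_id` mapping each `x ∈ s` to `{x}`. -/
def idEnv (s : Finset ℕ) : VEnv :=
  (s.sort (· ≤ ·)).foldr (fun x Δ => Δ.insert x ({x} : Finset ℕ)) ∅

/-- The term `y M₁ ⋯ Mₖ`. -/
def Lam.spineApp (y : ℕ) (l : List Lam) : Lam := l.foldl .app (.var y)

/-- The type `[]_{fv N₁} → ⋯ → []_{fv Nₖ} → a`. -/
def yTyRest (a : ℕ) : List Lam → STy
  | [] => .atom a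
  | N :: l => .arr0 N.fv (yTyRest a l)

/-- The type `[]_{fv M₁} → ⋯ → [α] → ⋯ → []_{fv Mₖ} → a`, with `[α]`
in the `i`-th argument position (0-based). -/
def yTy (α : STy) (a : ℕ) : List Lam → ℕ → STy
  | [], _ => .atom a
  | _ :: l, 0 => .arrP α [] (yTyRest a l)
  | N :: l, (i+1) => .arr0 N.fv (yTy α a l i)

namespace Pf

abbrev Env := Multiset (ℕ × STy)
abbrev VA := ℕ → Finset ℕ

/-- Typing of a substitution. -/
inductive Sub (P : VA → ℕ → Env → Lam → STy → Prop) :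
    ℕ → (ℕ → Lam) → VA → Env → Env → Prop
  | nil (σ : ℕ → Lam) (δ : VA) : Sub P 0 σ δ 0 0
  | cons {σ : ℕ → Lam} {δ : VA} {n k : ℕ} {Θ₀ Θ₁ Γ : Env} {z : ℕ} {α : STy} :
      P δ n Θ₀ (σ z) α → Sub P k σ δ Θ₁ Γ → Sub P (n + k) σ δ (Θ₀ + Θ₁) ((z, α) ::ₘ Γ)

def bag (x : ℕ) (s : Multiset STy) : Env := s.map (Prod.mk x)

/-- Auxiliary typing system with sizes; `b` says whether annotations are checked. -/
inductive J (b : Bool) : VA → ℕ → Env → Lam → STy → Prop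
  | var (δ : VA) (x : ℕ) (α : STy) : J b δ 0 {(x, α)} (.var x) α
  | app {δ : VA} {n k : ℕ} {E₀ E₁ : Env} {M N : Lam} {m : MTy} {β γ : STy} :
      γ = m.arr β → J b δ n E₀ M γ → Sub (J b) k (fun _ => N) δ E₁ (bag 0 m.toM) →
      (b = true → ∀ X, m = .empty X → X = N.fv.biUnion δ) →
      J b δ (n + k) (E₀ + E₁) (.app M N) β
  | lam {δ : VA} {n : ℕ} {E : Env} {x : ℕ} {X : Finset ℕ} {M : Lam} {m : MTy} {β γ : STy} :
      γ = m.arr β → (∀ p ∈ E, p.1 ≠ x) → (b = true → x ∈ M.fv) →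
      (b = true → ∀ X', m = .empty X' → X' = X) →
      J b (Function.update δ x X) n (E + bag x m.toM) M β →
      J b δ (n + 1) E (.lam x M) γ

theorem arr_inj {m m' : MTy} {β β' : STy} (h : m.arr β = m'.arr β') : m = m' ∧ β = β' := by
  cases m <;> cases m' <;> simp_all [MTy.arr]

section generic
variable {P : VA → ℕ → Env → Lam → STy → Prop}

theorem Sub.add {σ : ℕ → Lam} {δ : VA} {k₀ k₁ : ℕ} {Θ₀ Θ₁ Γ₀ Γ₁ : Env}
    (h : Sub P k₀ σ δ Θ₀ Γ₀) (h' : Sub P k₁ σ δ Θ₁ Γ₁) :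
    Sub P (k₀ + k₁) σ δ (Θ₀ + Θ₁) (Γ₀ + Γ₁) := by
  induction h with
  | nil => simpa using h'
  | cons hp _ ih =>
    have := Sub.cons hp (ih h')
    rwa [← add_assoc, ← add_assoc, ← Multiset.cons_add] at this

theorem Sub.split {σ : ℕ → Lam} {δ : VA} {k : ℕ} {Θ Γ : Env}
    (h : Sub P k σ δ Θ Γ) : ∀ Γ₀ Γ₁, Γ = Γ₀ + Γ₁ →
    ∃ k₀ k₁ Θ₀ Θ₁, k = k₀ + k₁ ∧ Θ = Θ₀ + Θ₁ ∧ Sub P k₀ σ δ Θ₀ Γ₀ ∧ Sub P k₁ σ δ Θ₁ Γ₁ := by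
  induction h with
  | nil σ δ =>
    intro Γ₀ Γ₁ h
    have h' := h.symm
    rw [add_eq_zero] at h'
    obtain ⟨rfl, rfl⟩ := h'
    exact ⟨0, 0, 0, 0, rfl, rfl, .nil _ _, .nil _ _⟩
  | @cons σ δ n k A B Γ z α hp _ ih =>
    intro Γ₀ Γ₁ h
    have hm : (z, α) ∈ Γ₀ + Γ₁ := h ▸ Multiset.mem_cons_self _ _
    rcases Multiset.mem_add.1 hm with hm | hm
    · obtain ⟨Γ₀, rfl⟩ := Multiset.exists_cons_of_mem hm
      rw [Multiset.cons_add, Multiset.cons_inj_right] at h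
      obtain ⟨k₀, k₁, C, D, rfl, rfl, h0, h1⟩ := ih _ _ h
      exact ⟨n + k₀, k₁, A + C, D, by omega, by rw [add_assoc], .cons hp h0, h1⟩
    · obtain ⟨Γ₁, rfl⟩ := Multiset.exists_cons_of_mem hm
      rw [Multiset.add_cons, Multiset.cons_inj_right] at h
      obtain ⟨k₀, k₁, C, D, rfl, rfl, h0, h1⟩ := ih _ _ h
      exact ⟨k₀, n + k₁, C, A + D, by omega, by rw [add_left_comm], h0, .cons hp h1⟩

theorem Sub.reidx {σ σ' : ℕ → Lam} {δ δ' : VA} {k : ℕ} {Θ Γ : Env} (f : ℕ → ℕ)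
    (h : Sub P k σ δ Θ Γ)
    (H : ∀ p ∈ Γ, ∀ n E, P δ n E (σ p.1) p.2 → P δ' n E (σ' (f p.1)) p.2) :
    Sub P k σ' δ' Θ (Γ.map (Prod.map f id)) := by
  induction h with
  | nil => exact .nil _ _
  | @cons σ δ n k A B Γ z α hp _ ih =>
    rw [Multiset.map_cons]
    exact .cons (H (z, α) (Multiset.mem_cons_self _ _) _ _ hp)
      (ih fun p hp => H p (Multiset.mem_cons_of_mem hp))

theorem Sub.mono {σ σ' : ℕ → Lam} {δ δ' : VA} {k : ℕ} {Θ Γ : Env}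
    (h : Sub P k σ δ Θ Γ)
    (H : ∀ p ∈ Γ, ∀ n E, P δ n E (σ p.1) p.2 → P δ' n E (σ' p.1) p.2) :
    Sub P k σ' δ' Θ Γ := by
  simpa using h.reidx id H

theorem bag_map (x y : ℕ) (s : Multiset STy) :
    (bag x s).map (Prod.map (fun _ => y) id) = bag y s := by
  simp [bag]

theorem Sub.rebag {σ σ' : ℕ → Lam} {δ : VA} {k x y : ℕ} {Θ : Env} {s : Multiset STy}
    (h : Sub P k σ δ Θ (bag x s)) (e : σ x = σ' y) : Sub P k σ' δ Θ (bag y s) := by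
  rw [← bag_map x y]
  refine h.reidx _ ?_
  intro p hp n E
  simp only [bag, Multiset.mem_map] at hp
  obtain ⟨a, _, rfl⟩ := hp
  simp [e]

theorem Sub.supp {σ : ℕ → Lam} {δ : VA} {k : ℕ} {Θ Γ : Env}
    (h : Sub P k σ δ Θ Γ)
    (H : ∀ p ∈ Γ, ∀ n E, P δ n E (σ p.1) p.2 → ∀ q ∈ E, q.1 ∈ (σ p.1).fv) :
    ∀ q ∈ Θ, ∃ p ∈ Γ, q.1 ∈ (σ p.1).fv := by
  induction h with
  | nil => simp
  | @cons σ δ n k A B Γ z α hp _ ih =>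
    intro q hq
    rcases Multiset.mem_add.1 hq with hq | hq
    · exact ⟨(z, α), Multiset.mem_cons_self _ _, H _ (Multiset.mem_cons_self _ _) _ _ hp q hq⟩
    · obtain ⟨p, hp, h⟩ := ih (fun p hp => H p (Multiset.mem_cons_of_mem hp)) q hq
      exact ⟨p, Multiset.mem_cons_of_mem hp, h⟩

theorem Sub.comp {τ τ' σ : ℕ → Lam} {δ δ' : VA} {n : ℕ} {E Γ : Env}
    (h : Sub P n τ δ E Γ)
    (H : ∀ z n E α k Θ, P δ n E (τ z) α → Sub P k σ δ' Θ E → P δ' (n + k) Θ (τ' z) α) :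
    ∀ k Θ, Sub P k σ δ' Θ E → Sub P (n + k) τ' δ' Θ Γ := by
  induction h with
  | nil =>
    intro k Θ h
    generalize hz : (0 : Env) = Z at h
    cases h with
    | nil => exact .nil _ _
    | cons => simp at hz
  | @cons τ δ n k A B Γ z α hp _ ih =>
    intro k' Θ h
    obtain ⟨k₀, k₁, C, D, rfl, rfl, h0, h1⟩ := h.split _ _ rfl
    have := Sub.cons (H _ _ _ _ _ _ hp h0) (ih H _ _ h1)
    rwa [show n + k₀ + (k + k₁) = n + k + (k₀ + k₁) by omega] at this

theorem Sub.decomp {τ τ' σ : ℕ → Lam} {δ δ' : VA} {n : ℕ} {E Γ : Env}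
    (h : Sub P n τ δ E Γ)
    (H : ∀ z n E α, P δ n E (τ z) α →
      ∃ n' k Γ', P δ' n' Γ' (τ' z) α ∧ Sub P k σ δ E Γ') :
    ∃ n' k Γ', Sub P n' τ' δ' Γ' Γ ∧ Sub P k σ δ E Γ' := by
  induction h with
  | nil => exact ⟨0, 0, 0, .nil _ _, .nil _ _⟩
  | @cons τ δ n k A B Γ z α hp _ ih =>
    obtain ⟨n1, k1, G1, h1, h1'⟩ := H _ _ _ _ hp
    obtain ⟨n2, k2, G2, h2, h2'⟩ := ih H
    exact ⟨_, _, _, .cons h1 h2, h1'.add h2'⟩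

end generic

theorem env_split (Γ : Env) (x : ℕ) : ∃ Γ₀ s, Γ = Γ₀ + bag x s ∧ ∀ p ∈ Γ₀, p.1 ≠ x := by
  induction Γ using Multiset.induction with
  | empty => exact ⟨0, 0, by simp [bag], by simp⟩
  | cons p Γ ih =>
    obtain ⟨Γ₀, s, rfl, h⟩ := ih
    obtain ⟨z, α⟩ := p
    by_cases hz : z = x
    · subst hz
      exact ⟨Γ₀, α ::ₘ s, by simp [bag], h⟩
    · refine ⟨(z, α) ::ₘ Γ₀, s, by simp, ?_⟩
      intro p hp
      rcases Multiset.mem_cons.1 hp with rfl | hp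
      · exact hz
      · exact h p hp

theorem env_unique {E E' : Env} {y : ℕ} {s s' : Multiset STy} (h : E + bag y s = E' + bag y s')
    (hE : ∀ p ∈ E, p.1 ≠ y) (hE' : ∀ p ∈ E', p.1 ≠ y) : E = E' ∧ s = s' := by
  have key : ∀ (E : Env) s, (∀ p ∈ E, p.1 ≠ y) →
      (E + bag y s).filter (fun p => p.1 ≠ y) = E := by
    intro E s hE
    rw [Multiset.filter_add, Multiset.filter_eq_self.2 hE, Multiset.filter_eq_nil.2, add_zero]
    intro p hp
    simp only [bag, Multiset.mem_map] at hp
    obtain ⟨a, _, rfl⟩ := hp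
    simp
  have e : E = E' := by rw [← key E s hE, h, key E' s' hE']
  subst e
  refine ⟨rfl, ?_⟩
  have := congrArg (Multiset.map Prod.snd) (add_left_cancel h)
  simpa [bag] using this

theorem exists_mty (s : Multiset STy) (X : Finset ℕ) :
    ∃ m : MTy, m.toM = s ∧ ∀ X', m = .empty X' → X' = X := by
  induction s using Quotient.inductionOn with
  | h l =>
    cases l with
    | nil => exact ⟨.empty X, rfl, by simp⟩
    | cons a l => exact ⟨.mk a l, rfl, by simp⟩

theorem mem_bag {x : ℕ} {s : Multiset STy} {p : ℕ × STy} (h : p ∈ bag x s) : p.1 = x := by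
  simp only [bag, Multiset.mem_map] at h
  obtain ⟨a, _, rfl⟩ := h
  rfl

theorem J.supp {b : Bool} : ∀ (M : Lam) {δ : VA} {n : ℕ} {E : Env} {α : STy},
    J b δ n E M α → ∀ q ∈ E, q.1 ∈ M.fv := by
  intro M
  induction M with
  | var x =>
    intro δ n E α h
    cases h
    simp [Lam.fv]
  | app M N ihM ihN =>
    intro δ n E α h q hq
    cases h with
    | app e h1 h2 h3 =>
      simp only [Lam.fv, Finset.mem_union]
      rcases Multiset.mem_add.1 hq with hq | hq
      · exact .inl (ihM h1 q hq)
      · obtain ⟨p, hp, h⟩ := h2.supp (fun p _ n E h => ihN h) q hq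
        exact .inr h
  | lam x M ih =>
    intro δ n E α h q hq
    cases h with
    | lam e h1 h2 h3 h4 =>
      simp only [Lam.fv, Finset.mem_erase]
      exact ⟨h1 q hq, ih h4 q (Multiset.mem_add.2 (.inl hq))⟩

theorem J.congr {b : Bool} : ∀ (M : Lam) {δ δ' : VA} {n : ℕ} {E : Env} {α : STy},
    J b δ n E M α → (b = true → ∀ z ∈ M.fv, δ z = δ' z) → J b δ' n E M α := by
  intro M
  induction M with
  | var x =>
    intro δ δ' n E α h _
    cases h
    exact .var _ _ _
  | app M N ihM ihN =>
    intro δ δ' n E α h H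
    cases h with
    | app e h1 h2 h3 =>
      refine .app e (ihM h1 fun hb z hz => H hb z (Finset.mem_union_left _ hz))
        (h2.mono fun p _ n E h => ihN h fun hb z hz => H hb z (Finset.mem_union_right _ hz)) ?_
      intro hb X hX
      rw [h3 hb X hX]
      exact Finset.biUnion_congr rfl fun z hz => H hb z (Finset.mem_union_right _ hz)
  | lam x M ih =>
    intro δ δ' n E α h H
    cases h with
    | lam e h1 h2 h3 h4 =>
      refine .lam e h1 h2 h3 (ih h4 ?_)
      intro hb z hz
      by_cases hzx : z = x
      · subst hzx; simp
      · simp only [Function.update_of_ne hzx]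
        exact H hb z (Finset.mem_erase.2 ⟨hzx, hz⟩)

theorem sub_var {b : Bool} {σ : ℕ → Lam} {δ : VA} (f : ℕ → ℕ) (Γ : Env)
    (H : ∀ p ∈ Γ, σ p.1 = .var (f p.1)) :
    Sub (J b) 0 σ δ (Γ.map (Prod.map f id)) Γ := by
  induction Γ using Multiset.induction with
  | empty => exact .nil _ _
  | cons p Γ ih =>
    have h1 : J b δ 0 {(f p.1, p.2)} (σ p.1) p.2 := by
      rw [H p (Multiset.mem_cons_self _ _)]; exact .var _ _ _
    have := Sub.cons h1 (ih fun p hp => H p (Multiset.mem_cons_of_mem hp))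
    simpa [Prod.map] using this

theorem sub_var_inv {b : Bool} {σ : ℕ → Lam} {δ : VA} {k : ℕ} {Θ Γ : Env} (f : ℕ → ℕ)
    (h : Sub (J b) k σ δ Θ Γ) (H : ∀ p ∈ Γ, σ p.1 = .var (f p.1)) :
    k = 0 ∧ Θ = Γ.map (Prod.map f id) := by
  induction h with
  | nil => simp
  | @cons σ δ n k A B Γ z α hp _ ih =>
    obtain ⟨rfl, rfl⟩ := ih fun p hp => H p (Multiset.mem_cons_of_mem hp)
    have e := H (z, α) (Multiset.mem_cons_self _ _)
    simp only at e
    rw [e] at hp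
    cases hp
    simp [Prod.map]

theorem fresh_notin (s : Finset ℕ) : Lam.freshVar s ∉ s := by
  intro h
  have := Finset.le_sup (f := id) h
  simp only [Lam.freshVar, id] at this
  omega

theorem fv_substF : ∀ (M : Lam) (σ : ℕ → Lam),
    (M.substF σ).fv = M.fv.biUnion fun z => (σ z).fv := by
  intro M
  induction M with
  | var x => intro σ; simp [Lam.substF, Lam.fv]
  | app M N ihM ihN =>
    intro σ
    simp [Lam.substF, Lam.fv, ihM, ihN, Finset.union_biUnion]
  | lam x M ih =>
    intro σ
    simp only [Lam.substF, Lam.fv, ih]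
    have hy := fresh_notin ((M.fv.erase x).biUnion fun z => (σ z).fv)
    generalize Lam.freshVar ((M.fv.erase x).biUnion fun z => (σ z).fv) = y at hy
    ext w
    simp only [Finset.mem_erase, Finset.mem_biUnion]
    constructor
    · rintro ⟨hw, z, hz, h⟩
      by_cases hzx : z = x
      · subst hzx; simp [Lam.fv] at h; exact absurd h hw
      · rw [Function.update_of_ne hzx] at h
        exact ⟨z, ⟨hzx, hz⟩, h⟩
    · rintro ⟨z, ⟨hzx, hz⟩, h⟩
      refine ⟨?_, z, hz, ?_⟩
      · rintro rfl
        exact hy (Finset.mem_biUnion.2 ⟨z, Finset.mem_erase.2 ⟨hzx, hz⟩, h⟩)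
      · rwa [Function.update_of_ne hzx]

theorem IsI_substF : ∀ (M : Lam) (σ : ℕ → Lam), M.IsI → (∀ z, (σ z).IsI) →
    (M.substF σ).IsI := by
  intro M
  induction M with
  | var x => intro σ _ h; exact h x
  | app M N ihM ihN => intro σ hM h; exact ⟨ihM σ hM.1 h, ihN σ hM.2 h⟩
  | lam x M ih =>
    intro σ hM h
    refine ⟨?_, ih _ hM.2 ?_⟩
    · rw [fv_substF, Finset.mem_biUnion]
      exact ⟨x, hM.1, by simp [Lam.fv]⟩
    · intro z
      by_cases hzx : z = x
      · subst hzx; simp [Lam.IsI]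
      · rw [Function.update_of_ne hzx]; exact h z

theorem IsI_head {M M' : Lam} (h : Head M M') : M.IsI → M'.IsI ∧ M'.fv = M.fv := by
  induction h with
  | beta x M N =>
    rintro ⟨⟨hx, hM⟩, hN⟩
    constructor
    · refine IsI_substF _ _ hM fun z => ?_
      by_cases hz : z = x <;> simp [hz, hN, Lam.IsI]
    · simp only [Lam.subst, fv_substF, Lam.fv]
      ext w
      simp only [Finset.mem_biUnion, Finset.mem_union, Finset.mem_erase]
      constructor
      · rintro ⟨z, hz, h⟩
        by_cases hzx : z = x
        · simp [hzx] at h; exact .inr h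
        · simp [hzx, Lam.fv] at h; subst h; exact .inl ⟨hzx, hz⟩
      · rintro (⟨h1, h2⟩ | h)
        · exact ⟨w, h2, by simp [h1, Lam.fv]⟩
        · exact ⟨x, hx, by simp [h]⟩
  | app N _ _ ih =>
    rintro ⟨hM, hN⟩
    obtain ⟨h1, h2⟩ := ih hM
    exact ⟨⟨h1, hN⟩, by simp [Lam.fv, h2]⟩
  | lam x _ ih =>
    rintro ⟨hx, hM⟩
    obtain ⟨h1, h2⟩ := ih hM
    exact ⟨⟨by rw [h2]; exact hx, h1⟩, by simp [Lam.fv, h2]⟩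

/-! ## Subject reduction -/

theorem subst_lemma : ∀ (M : Lam) {σ : ℕ → Lam} {δ δ' : VA} {n k : ℕ} {Γ Θ : Env} {α : STy},
    J false δ n Γ M α → Sub (J false) k σ δ' Θ Γ → J false δ' (n + k) Θ (M.substF σ) α := by
  intro M
  induction M with
  | var x =>
    intro σ δ δ' n k Γ Θ α h hs
    cases h
    have : (({(x, α)} : Env)) = bag x {α} := by simp [bag]
    generalize hz : ({(x, α)} : Env) = Z at hs
    cases hs with
    | nil => simp at hz
    | @cons _ _ n k A B Γ z α hp hs =>
      have h1 := congrArg Multiset.card hz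
      simp at h1
      subst h1
      simp at hz
      obtain ⟨rfl, rfl⟩ := hz
      generalize hz : (0 : Env) = Z at hs
      cases hs with
      | nil => simpa [Lam.substF] using hp
      | cons => simp at hz
  | app M N ihM ihN =>
    intro σ δ δ' n k Γ Θ α h hs
    cases h with
    | @app _ n₁ n₂ _ _ _ _ _ _ _ e h1 h2 h3 =>
      obtain ⟨k₀, k₁, C, D, rfl, rfl, hs0, hs1⟩ := hs.split _ _ rfl
      have h5 : Sub (J false) (n₂ + k₁) (fun _ => N.substF σ) δ' D _ :=
        h2.comp (fun z n E α k Θ h h' => ihN h h') _ _ hs1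
      have := J.app e (ihM h1 hs0) h5 (by simp)
      rwa [show n₁ + k₀ + (n₂ + k₁) = n₁ + n₂ + (k₀ + k₁) by omega] at this
  | lam x M ih =>
    intro σ δ δ' n k Γ Θ α h hs
    cases h with
    | @lam _ n _ _ X _ m _ _ e h1 h2 h3 h4 =>
      simp only [Lam.substF]
      have hy := fresh_notin ((M.fv.erase x).biUnion fun z => (σ z).fv)
      generalize Lam.freshVar ((M.fv.erase x).biUnion fun z => (σ z).fv) = y at hy
      rw [show n + 1 + k = (n + k) + 1 by omega]
      refine .lam (X := X) e ?_ (by simp) (by simp) ?_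
      · rintro q hq rfl
        obtain ⟨p, hp, h⟩ := hs.supp (fun p _ n E h => J.supp _ h) q hq
        refine hy (Finset.mem_biUnion.2 ⟨p.1, Finset.mem_erase.2 ⟨h1 p hp, ?_⟩, h⟩)
        exact J.supp _ h4 p (Multiset.mem_add.2 (.inl hp))
      · refine ih h4 ?_
        have s1 : Sub (J false) k (Function.update σ x (.var y)) (Function.update δ' y X) Θ Γ := by
          refine hs.mono fun p hp n E h => ?_
          rw [Function.update_of_ne (h1 p hp)]
          exact J.congr _ h (by simp)
        have s2 : Sub (J false) 0 (Function.update σ x (.var y)) (Function.update δ' y X)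
            (bag y m.toM) (bag x m.toM) := by
          rw [← bag_map x y]
          exact sub_var _ _ fun p hp => by simp [mem_bag hp]
        exact s1.add s2

theorem subject_reduction {M M' : Lam} (h : Head M M') : ∀ {δ : VA} {n : ℕ} {E : Env} {α : STy},
    J false δ n E M α → ∃ n' < n, J false δ n' E M' α := by
  induction h with
  | beta x M N =>
    intro δ n E α h
    cases h with
    | @app _ n₁ n₂ E₀ E₁ _ _ _ _ _ e h1 h2 h3 =>
      cases h1 with
      | @lam _ n _ _ X _ m' _ _ e' g1 g2 g3 g4 =>
        obtain ⟨rfl, rfl⟩ := arr_inj (e.symm.trans e')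
        refine ⟨n + n₂, by omega, ?_⟩
        refine subst_lemma M g4 ?_
        have s1 : Sub (J false) 0 (fun z => if z = x then N else .var z) δ E₀ E₀ := by
          have := sub_var (b := false) (σ := fun z => if z = x then N else .var z) (δ := δ) id E₀
            (fun p hp => by simp [g1 p hp])
          simpa using this
        have := s1.add (h2.rebag (y := x) (by simp))
        simpa using this
  | app N _ _ ih =>
    intro δ n E α h
    cases h with
    | @app _ n₁ n₂ E₀ E₁ _ _ _ _ _ e h1 h2 h3 =>
      obtain ⟨n', hn, h⟩ := ih h1
      exact ⟨n' + n₂, by omega, .app e h h2 h3⟩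
  | lam x _ ih =>
    intro δ n E α h
    cases h with
    | lam e g1 g2 g3 g4 =>
      obtain ⟨n', hn, h⟩ := ih g4
      exact ⟨n' + 1, by omega, .lam e g1 (by simp) g3 h⟩

theorem progress (M : Lam) : (∃ M', Head M M') ∨ Hnf M := by
  induction M with
  | var x => exact .inr (.neutral (.var x))
  | app M N ihM _ =>
    by_cases ha : M.isAbs
    · cases M with
      | lam x M => exact .inl ⟨_, .beta x M N⟩
      | _ => exact ha.elim
    · rcases ihM with ⟨M', h⟩ | h
      · exact .inl ⟨_, .app N ha h⟩
      · cases h with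
        | neutral h => exact .inr (.neutral (.app N h))
        | lam => exact (ha trivial).elim
  | lam x M ih =>
    rcases ih with ⟨M', h⟩ | h
    · exact .inl ⟨_, .lam x h⟩
    · exact .inr (.lam x h)

theorem hasHnf_of_J : ∀ (n : ℕ) {M : Lam} {δ : VA} {E : Env} {α : STy},
    J false δ n E M α → HasHnf M := by
  intro n
  induction n using Nat.strong_induction_on with
  | _ n ih =>
    intro M δ E α h
    rcases progress M with ⟨M', hs⟩ | hh
    · obtain ⟨n', hn, h'⟩ := subject_reduction hs h
      obtain ⟨H, h1, h2⟩ := ih n' hn h'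
      exact ⟨H, .head hs h1, h2⟩
    · exact ⟨M, .refl, hh⟩

/-! ## From derivations to the auxiliary system -/

noncomputable def toM (Γ : TEnv) : Env := Γ.sum bag

theorem bag_add (x : ℕ) (s t : Multiset STy) : bag x (s + t) = bag x s + bag x t := by
  simp [bag]

theorem toM_add (Γ Γ' : TEnv) : toM (Γ + Γ') = toM Γ + toM Γ' :=
  Finsupp.sum_add_index' (fun _ => by simp [bag]) (fun _ _ _ => bag_add _ _ _)

theorem toM_single (x : ℕ) (s : Multiset STy) : toM (Finsupp.single x s) = bag x s :=
  Finsupp.sum_single_index (by simp [bag])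

theorem toM_zero : toM 0 = 0 := Finsupp.sum_zero_index

theorem toM_notin {Γ : TEnv} {x : ℕ} (h : Γ x = 0) : ∀ p ∈ toM Γ, p.1 ≠ x := by
  intro p hp
  simp only [toM, Finsupp.sum] at hp
  rw [Multiset.mem_sum] at hp
  obtain ⟨z, hz, hp⟩ := hp
  rw [mem_bag hp]
  rintro rfl
  simp [h] at hz

theorem derB_sub {N : Lam} {δ : VA} (ih : ∀ {Γ : TEnv} {Δ : VEnv} {α : STy},
    Der Γ Δ N (.simple α) → ∃ n, J false δ n (toM Γ) N α) :
    ∀ (l : List STy) {Γ : TEnv} {Δ : VEnv} {α : STy}, DerB Γ Δ N (.mk α l) →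
      ∃ k, Sub (J false) k (fun _ => N) δ (toM Γ) (bag 0 (MTy.mk α l).toM) := by
  intro l
  induction l with
  | nil =>
    intro Γ Δ α h
    cases h with
    | one h =>
      obtain ⟨n, h⟩ := ih h
      refine ⟨n + 0, ?_⟩
      have := Sub.cons (P := J false) (σ := fun _ => N) (z := 0) h (.nil _ _)
      simpa [bag, MTy.toM] using this
  | cons a l ihl =>
    intro Γ Δ α h
    cases h with
    | cons h h' =>
      obtain ⟨n, h⟩ := ih h
      obtain ⟨k, h'⟩ := ihl h'
      refine ⟨n + k, ?_⟩
      have := Sub.cons (P := J false) (σ := fun _ => N) (z := 0) h h'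
      rw [toM_add]
      simpa [bag, MTy.toM] using this

theorem der_J : ∀ (M : Lam) {δ : VA} {Γ : TEnv} {Δ : VEnv} {α : STy},
    Der Γ Δ M (.simple α) → ∃ n, J false δ n (toM Γ) M α := by
  intro M
  induction M with
  | var x =>
    intro δ Γ Δ α h
    cases h
    refine ⟨0, ?_⟩
    rw [toM_single]
    exact .var _ _ _
  | app M N ihM ihN =>
    intro δ Γ Δ α h
    cases h with
    | @app _ Γ₁ _ _ _ _ m _ h1 h2 h3 =>
      obtain ⟨n, h1⟩ := ihM (δ := δ) h1
      have : ∃ k, Sub (J false) k (fun _ => N) δ (toM Γ₁) (bag 0 m.toM) := by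
        cases m with
        | empty X =>
          cases h2
          rw [toM_zero]
          exact ⟨0, .nil _ _⟩
        | mk a l => exact derB_sub ihN l h2
      obtain ⟨k, h⟩ := this
      rw [toM_add]
      exact ⟨_, .app rfl h1 h (by simp)⟩
  | lam x M ih =>
    intro δ Γ Δ α h
    cases h with
    | @lam0 _ _ _ X _ β h1 h2 h3 =>
      obtain ⟨n, h⟩ := ih (δ := Function.update δ x X) h3
      refine ⟨n + 1, .lam (m := .empty X) (X := X) rfl (toM_notin h1) (by simp) (by simp) ?_⟩
      simpa [bag, MTy.toM] using h
    | @lamP _ _ _ X _ a l β h1 h2 h3 =>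
      obtain ⟨n, h⟩ := ih (δ := Function.update δ x X) h3
      refine ⟨n + 1, .lam (m := .mk a l) (X := X) rfl (toM_notin h1) (by simp) (by simp) ?_⟩
      rwa [toM_add, toM_single] at h

/-! ## Subject expansion -/

theorem expand_lemma : ∀ (M : Lam) {σ : ℕ → Lam} {δ : VA} {n : ℕ} {E : Env} {α : STy},
    M.IsI → J true δ n E (M.substF σ) α →
    ∃ n' k Γ, J true (fun z => (σ z).fv.biUnion δ) n' Γ M α ∧ Sub (J true) k σ δ E Γ := by
  intro M
  induction M with
  | var x =>
    intro σ δ n E α _ h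
    refine ⟨0, n + 0, {(x, α)}, .var _ _ _, ?_⟩
    have := Sub.cons (P := J true) (σ := σ) (z := x) h (.nil _ _)
    simpa using this
  | app M N ihM ihN =>
    intro σ δ n E α hI h
    cases h with
    | app e h1 h2 h3 =>
      obtain ⟨n1, k1, G1, a1, b1⟩ := ihM hI.1 h1
      obtain ⟨n2, k2, G2, a2, b2⟩ := h2.decomp (τ' := fun _ => N) (σ := σ)
        (δ' := fun z => (σ z).fv.biUnion δ) (fun z n E α h => ihN hI.2 h)
      refine ⟨_, _, _, .app e a1 a2 ?_, b1.add b2⟩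
      intro hb X hX
      rw [h3 hb X hX, fv_substF, Finset.biUnion_biUnion]
  | lam x M ih =>
    intro σ δ n E α hI h
    simp only [Lam.substF] at h
    have hy := fresh_notin ((M.fv.erase x).biUnion fun z => (σ z).fv)
    generalize Lam.freshVar ((M.fv.erase x).biUnion fun z => (σ z).fv) = y at hy h
    have hy' : ∀ z ∈ M.fv, z ≠ x → y ∉ (σ z).fv := fun z hz hzx h =>
      hy (Finset.mem_biUnion.2 ⟨z, Finset.mem_erase.2 ⟨hzx, hz⟩, h⟩)
    cases h with
    | @lam _ n _ _ X _ m _ _ e h1 h2 h3 h4 =>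
      obtain ⟨n', k, G, a, s⟩ := ih hI.2 h4
      obtain ⟨G, t, rfl, hG⟩ := env_split G x
      have hGM : ∀ p ∈ G, p.1 ∈ M.fv := fun p hp =>
        J.supp _ a p (Multiset.mem_add.2 (.inl hp))
      obtain ⟨k₀, k₁, C, D, rfl, hE, s0, s1⟩ := s.split _ _ rfl
      obtain ⟨rfl, rfl⟩ := sub_var_inv (fun _ => y) s1 (fun p hp => by simp [mem_bag hp])
      rw [bag_map] at hE
      have s0' : Sub (J true) k₀ σ δ C G := by
        refine s0.mono fun p hp n E h => ?_
        rw [Function.update_of_ne (hG p hp)] at h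
        refine J.congr _ h fun _ z hz => ?_
        rw [Function.update_of_ne]
        rintro rfl
        exact hy' _ (hGM p hp) (hG p hp) hz
      have hC : ∀ q ∈ C, q.1 ≠ y := by
        rintro q hq rfl
        obtain ⟨p, hp, h⟩ := s0'.supp (fun p _ n E h => J.supp _ h) q hq
        exact hy' _ (hGM p hp) (hG p hp) h
      obtain ⟨rfl, rfl⟩ := env_unique hE h1 hC
      refine ⟨n' + 1, k₀, G, .lam (X := X) e hG (fun _ => hI.1) h3 ?_, s0'⟩
      refine J.congr _ a fun _ z hz => ?_
      by_cases hzx : z = x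
      · subst hzx; simp [Lam.fv]
      · simp only [Function.update_of_ne hzx]
        refine Finset.biUnion_congr rfl fun w hw => ?_
        rw [Function.update_of_ne]
        rintro rfl
        exact hy' _ hz hzx hw

theorem subject_expansion {M M' : Lam} (h : Head M M') : ∀ {δ : VA} {n : ℕ} {E : Env} {α : STy},
    M.IsI → J true δ n E M' α → ∃ n', J true δ n' E M α := by
  induction h with
  | beta x M N =>
    intro δ n E α hI h
    obtain ⟨n', k, G, a, s⟩ := expand_lemma M hI.1.2 h
    obtain ⟨G, t, rfl, hG⟩ := env_split G x
    obtain ⟨k₀, k₁, C, D, rfl, rfl, s0, s1⟩ := s.split _ _ rfl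
    obtain ⟨rfl, rfl⟩ := sub_var_inv id s0 (fun p hp => by simp [hG p hp])
    obtain ⟨m, rfl, hm⟩ := exists_mty t (N.fv.biUnion δ)
    have s2 : Sub (J true) k₁ (fun _ => N) δ D (bag 0 m.toM) := s1.rebag (by simp)
    refine ⟨n' + 1 + k₁, .app rfl (.lam (X := N.fv.biUnion δ) rfl ?_ (fun _ => hI.1.1)
      (fun _ => hm) ?_) s2 (fun _ => hm)⟩
    · simpa using hG
    · simp only [Prod.map_id, Multiset.map_id]
      refine J.congr _ a fun _ z hz => ?_
      by_cases hzx : z = x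
      · subst hzx; simp
      · simp [hzx, Lam.fv]
  | app N _ _ ih =>
    intro δ n E α hI h
    cases h with
    | app e h1 h2 h3 =>
      obtain ⟨n', h⟩ := ih hI.1 h1
      exact ⟨_, .app e h h2 h3⟩
  | lam x _ ih =>
    intro δ n E α hI h
    cases h with
    | lam e g1 g2 g3 g4 =>
      obtain ⟨n', h⟩ := ih hI.2 g4
      exact ⟨_, .lam e g1 (fun _ => hI.1) g3 h⟩

theorem neutral_J {M : Lam} (h : Neutral M) (δ : VA) : ∀ α, ∃ n E, J true δ n E M α := by
  induction h with
  | var x => intro α; exact ⟨_, _, .var _ _ _⟩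
  | app N _ ih =>
    intro α
    obtain ⟨n, E, h⟩ := ih ((MTy.empty (N.fv.biUnion δ)).arr α)
    exact ⟨_, _, .app rfl h (.nil _ _) (by simp)⟩

theorem hnf_J {M : Lam} (h : Hnf M) : ∀ (δ : VA), M.IsI → ∃ n E α, J true δ n E M α := by
  induction h with
  | neutral h =>
    intro δ _
    obtain ⟨n, E, h⟩ := neutral_J h δ (.atom 0)
    exact ⟨n, E, _, h⟩
  | lam x _ ih =>
    intro δ hI
    obtain ⟨n, E, α, h⟩ := ih (Function.update δ x ∅) hI.2
    obtain ⟨G, t, rfl, hG⟩ := env_split E x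
    obtain ⟨m, rfl, hm⟩ := exists_mty t ∅
    exact ⟨_, _, _, .lam rfl hG (fun _ => hI.1) (fun _ => hm) h⟩

theorem headStar_J {M H : Lam} (h : HeadStar M H) (hH : Hnf H) (δ : VA) :
    M.IsI → ∃ n E α, J true δ n E M α := by
  induction h using Relation.ReflTransGen.head_induction_on with
  | refl => exact hnf_J hH δ
  | head hs _ ih =>
    intro hI
    obtain ⟨n, E, α, h⟩ := ih (IsI_head hs hI).1
    obtain ⟨n', h⟩ := subject_expansion hs hI h
    exact ⟨n', E, α, h⟩

/-! ## From the auxiliary system to derivations -/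

noncomputable def toT (E : Env) : TEnv := (E.map fun p => Finsupp.single p.1 {p.2}).sum

theorem toT_add (E E' : Env) : toT (E + E') = toT E + toT E' := by simp [toT]

theorem toT_zero : toT 0 = 0 := by simp [toT]

theorem toT_bag (x : ℕ) (s : Multiset STy) : toT (bag x s) = Finsupp.single x s := by
  induction s using Multiset.induction with
  | empty => simp [bag, toT]
  | cons a s ih =>
    have : bag x (a ::ₘ s) = {(x, a)} + bag x s := by simp [bag]
    rw [this, toT_add, ih]
    simp only [toT, Multiset.map_singleton, Multiset.sum_singleton]
    rw [← Finsupp.single_add, Multiset.singleton_add]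

theorem toT_notin {E : Env} {x : ℕ} (h : ∀ p ∈ E, p.1 ≠ x) : toT E x = 0 := by
  induction E using Multiset.induction with
  | empty => simp [toT]
  | cons p E ih =>
    have : toT (p ::ₘ E) = Finsupp.single p.1 {p.2} + toT E := by simp [toT]
    rw [this, Finsupp.add_apply, ih fun p hp => h p (Multiset.mem_cons_of_mem hp),
      Finsupp.single_eq_of_ne' (h p (Multiset.mem_cons_self _ _))]
    rfl

/-- Restriction of a total map to a finite set of variables. -/
noncomputable def res (δ : VA) (s : Finset ℕ) : VEnv :=
  s.toList.foldr (fun x Δ => Δ.insert x (δ x)) ∅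

theorem lookup_foldr (δ : VA) (l : List ℕ) (z : ℕ) :
    Finmap.lookup z (l.foldr (fun x Δ => Finmap.insert x (δ x) Δ) (∅ : VEnv)) =
      if z ∈ l then some (δ z) else none := by
  induction l with
  | nil => simp
  | cons a l ih =>
    by_cases h : z = a
    · subst h; simp
    · simp [Finmap.lookup_insert_of_ne _ h, ih, h]

theorem lookup_res (δ : VA) (s : Finset ℕ) (z : ℕ) :
    Finmap.lookup z (res δ s) = if z ∈ s then some (δ z) else none := by
  simp [res, lookup_foldr]

theorem mem_res {δ : VA} {s : Finset ℕ} {z : ℕ} : z ∈ res δ s ↔ z ∈ s := by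
  rw [← Finmap.lookup_isSome, lookup_res]
  split_ifs <;> simp_all

theorem keys_res (δ : VA) (s : Finset ℕ) : (res δ s).keys = s := by
  ext z; rw [Finmap.mem_keys, mem_res]

theorem uni_res (δ : VA) (s : Finset ℕ) : (res δ s).uni = s.biUnion δ := by
  simp only [VEnv.uni, keys_res]
  refine Finset.biUnion_congr rfl fun z hz => ?_
  simp [lookup_res, hz]

theorem res_union (δ : VA) (s t : Finset ℕ) : res δ (s ∪ t) = res δ s ∪ res δ t := by
  refine Finmap.ext_lookup fun z => ?_
  by_cases h : z ∈ s
  · rw [Finmap.lookup_union_left (mem_res.2 h)]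
    simp [lookup_res, h]
  · rw [Finmap.lookup_union_right (fun h' => h (mem_res.1 h'))]
    simp [lookup_res, h]

theorem res_insert (δ : VA) (s : Finset ℕ) (x : ℕ) (X : Finset ℕ) (h : x ∈ s) :
    (res δ (s.erase x)).insert x X = res (Function.update δ x X) s := by
  refine Finmap.ext_lookup fun z => ?_
  by_cases hz : z = x
  · subst hz; simp [lookup_res, h]
  · simp [Finmap.lookup_insert_of_ne _ hz, lookup_res, hz]

theorem res_coh (δ : VA) (s t : Finset ℕ) : VEnv.Coh (res δ s) (res δ t) := by
  intro x h1 h2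
  rw [mem_res] at h1 h2
  simp [lookup_res, h1, h2]

theorem sub_nil_inv {P : VA → ℕ → Env → Lam → STy → Prop} {σ : ℕ → Lam} {δ : VA} {k : ℕ}
    {Θ : Env} (h : Sub P k σ δ Θ 0) : k = 0 ∧ Θ = 0 := by
  generalize hz : (0 : Env) = Z at h
  cases h with
  | nil => simp
  | cons => simp at hz

theorem sub_cons_inv {P : VA → ℕ → Env → Lam → STy → Prop} {σ : ℕ → Lam} {δ : VA} {k : ℕ}
    {Θ Γ : Env} {z : ℕ} {α : STy} (h : Sub P k σ δ Θ ((z, α) ::ₘ Γ)) :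
    ∃ n k' Θ₀ Θ₁, Θ = Θ₀ + Θ₁ ∧ P δ n Θ₀ (σ z) α ∧ Sub P k' σ δ Θ₁ Γ := by
  rw [← Multiset.singleton_add] at h
  obtain ⟨k₀, k₁, C, D, rfl, rfl, s0, s1⟩ := h.split _ _ rfl
  refine ⟨k₀, k₁, C, D, rfl, ?_, s1⟩
  generalize hz : ({(z, α)} : Env) = Z at s0
  cases s0 with
  | nil => simp at hz
  | @cons _ _ n k A B Γ z α hp hs =>
    have h1 := congrArg Multiset.card hz
    simp at h1
    subst h1
    simp at hz
    obtain ⟨rfl, rfl⟩ := hz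
    obtain ⟨rfl, rfl⟩ := sub_nil_inv hs
    simpa using hp

theorem sub_derB {N : Lam} {δ : VA} (ih : ∀ {n : ℕ} {E : Env} {α : STy},
    J true δ n E N α → Der (toT E) (res δ N.fv) N (.simple α)) :
    ∀ (l : List STy) {k : ℕ} {E : Env} {α : STy},
      Sub (J true) k (fun _ => N) δ E (bag 0 (MTy.mk α l).toM) →
      DerB (toT E) (res δ N.fv) N (.mk α l) := by
  intro l
  induction l with
  | nil =>
    intro k E α h
    simp only [MTy.toM, bag, Multiset.map_cons] at h
    obtain ⟨n, k', C, D, rfl, hp, hs⟩ := sub_cons_inv h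
    obtain ⟨rfl, rfl⟩ := sub_nil_inv (by simpa using hs)
    simpa using DerB.one (ih hp)
  | cons a l ihl =>
    intro k E α h
    simp only [MTy.toM, bag, Multiset.map_cons] at h
    obtain ⟨n, k', C, D, rfl, hp, hs⟩ := sub_cons_inv h
    rw [toT_add]
    exact .cons (ih hp) (ihl (by simpa [MTy.toM, bag] using hs))

theorem J_der : ∀ (M : Lam) {δ : VA} {n : ℕ} {E : Env} {α : STy},
    J true δ n E M α → Der (toT E) (res δ M.fv) M (.simple α) := by
  intro M
  induction M with
  | var x =>
    intro δ n E α h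
    cases h
    have h1 : toT {(x, α)} = Finsupp.single x {α} := by simp [toT]
    have h2 : res δ {x} = Finmap.singleton x (δ x) := by
      refine Finmap.ext_lookup fun z => ?_
      by_cases hz : z = x
      · subst hz; simp [lookup_res]
      · rw [lookup_res, Finmap.lookup_eq_none.2] <;> simp [hz]
    rw [h1]
    simp only [Lam.fv, h2]
    exact .ax _ _ _
  | app M N ihM ihN =>
    intro δ n E α h
    cases h with
    | @app _ _ _ _ _ _ _ m _ _ e h1 h2 h3 =>
      subst e
      simp only [Lam.fv]
      rw [toT_add, res_union]
      refine .app (ihM h1) ?_ (res_coh _ _ _)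
      cases m with
      | empty X =>
        obtain ⟨_, rfl⟩ := sub_nil_inv (by simpa [bag, MTy.toM] using h2)
        rw [toT_zero, h3 rfl X rfl, ← uni_res]
        exact .bang0 (keys_res _ _)
      | mk a l => exact sub_derB ihN l h2
  | lam x M ih =>
    intro δ n E α h
    cases h with
    | @lam _ _ _ _ X _ m _ _ e h1 h2 h3 h4 =>
      subst e
      have h := ih h4
      simp only [Lam.fv]
      rw [← res_insert _ _ _ _ (h2 rfl)] at h
      have hx : x ∉ res δ (M.fv.erase x) := by simp [mem_res]
      cases m with
      | empty X' =>
        obtain rfl := h3 rfl X' rfl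
        refine .lam0 (toT_notin h1) hx ?_
        simpa [bag, MTy.toM] using h
      | mk a l =>
        rw [toT_add, toT_bag] at h
        exact .lamP (toT_notin h1) hx h

end Pf

/-- typability with a simple type characterizes having a
head normal form. -/
theorem stmt14 (M : Lam) (hM : M.IsI) :
    (∃ (Γ : TEnv) (Δ : VEnv) (α : STy), Der Γ Δ M (.simple α)) ↔ HasHnf M := by
  constructor
  · rintro ⟨Γ, Δ, α, h⟩
    obtain ⟨n, h⟩ := Pf.der_J M (δ := fun _ => ∅) h
    exact Pf.hasHnf_of_J n h
  · rintro ⟨H, h1, h2⟩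
    obtain ⟨n, E, α, h⟩ := Pf.headStar_J h1 h2 (fun _ => ∅) hM
    exact ⟨_, _, _, Pf.J_der M h⟩
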